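/- For every k with 0 ≤ k ≤ n − b − 1, the set I_k = {α_0, α_1, …, α_k} is a differential ideal of DS_{a,b} = {α_0,…,α_{n−b}} with respect to D: I_k is closed under addition, D(I_k) ⊆ I_k, and for every α_i ∈ I_k and every α_j ∈ DS_{a,b} both α_i · α_j ∈ I_k and α_j · α_i ∈ I_k; in fact α_i · α_j = α_0 for all 0 ≤ i, j ≤ n − b − 1. These ideals form a chain I_0 ⊂ I_1 ⊂ ⋯ ⊂ I_{n−b−1}. -/

import Mathlib

/-- Pointwise-max addition on endomorphisms of the chain `Fin N`. -/
def sAdd {N : ℕ} (f g : Fin N → Fin N) : Fin N → Fin N := fun i => max (f i) (g i)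

/-- Multiplication in diagram order: `(f·g)(i) = g (f i)`. -/
def sMul {N : ℕ} (f g : Fin N → Fin N) : Fin N → Fin N := fun i => g (f i)

/-- The element `α_k` of the string `STR{a,b}`: `α_k i = a` if `i ≤ N - k - 1`
    (equivalently `i + k < N`) and `α_k i = b` otherwise. -/
def alpha {N : ℕ} (a b : Fin N) (k : ℕ) : Fin N → Fin N :=
  fun i => if (i : ℕ) + k < N then a else b

/-- The subset `I_k = {α_0, α_1, …, α_k}` of the string. -/
def Iset {N : ℕ} (a b : Fin N) (k : ℕ) : Set (Fin N → Fin N) :=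
  {f | ∃ m ≤ k, f = alpha a b m}

/-!
Composing `α_k` with any `g` on the right only relabels its two values: `α_k · g` is the step map
from `g a` to `g b` with the same jump. So right multiplication by `α_j` depends only on
`α_j a` and `α_j b`: if both equal `a` the product is the constant map `α_0`, and if `a`, `b` are
fixed the product is `α_k`. On the additive side, `k ↦ α_k` is monotone from a linear order, hence
carries maxima to sums.
-/

section TypeTwoString

variable {n : ℕ} {a b : Fin n} {i j k : ℕ}

theorem alpha_apply_of_lt {x : Fin n} (h : (x : ℕ) + k < n) : alpha a b k x = a :=
  if_pos h

theorem alpha_apply_of_le {x : Fin n} (h : n ≤ (x : ℕ) + k) : alpha a b k x = b :=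
  if_neg h.not_gt

theorem alpha_zero (a b : Fin n) : alpha a b 0 = fun _ => a :=
  funext fun x => alpha_apply_of_lt x.isLt

theorem alpha_self (a : Fin n) (k : ℕ) : alpha a a k = fun _ => a :=
  funext fun _ => ite_self a

theorem alpha_monotone (hab : a ≤ b) : Monotone (alpha a b) := by
  intro j k hjk x
  by_cases hk : (x : ℕ) + k < n
  · rw [alpha_apply_of_lt hk, alpha_apply_of_lt (by omega)]
  · rw [alpha_apply_of_le (not_lt.mp hk)]
    unfold alpha
    split_ifs
    exacts [hab, le_rfl]

theorem alpha_ne_alpha_of_lt (hab : a ≠ b) (hjk : j < k) (hk : k ≤ n) :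
    alpha a b j ≠ alpha a b k := by
  intro h
  let x : Fin n := ⟨n - k, by omega⟩
  have hj : alpha a b j x = a := alpha_apply_of_lt (by dsimp only [x]; omega)
  have hk : alpha a b k x = b := alpha_apply_of_le (by dsimp only [x]; omega)
  exact hab (hj.symm.trans ((congrFun h x).trans hk))

theorem alpha_injOn (hab : a ≠ b) : Set.InjOn (alpha a b) (Set.Iic n) := by
  intro j hj k hk h
  rcases lt_trichotomy j k with hjk | hjk | hkj
  · exact absurd h (alpha_ne_alpha_of_lt hab hjk hk)
  · exact hjk
  · exact absurd h.symm (alpha_ne_alpha_of_lt hab hkj hj)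

theorem sAdd_alpha (hab : a ≤ b) (i j : ℕ) :
    sAdd (alpha a b i) (alpha a b j) = alpha a b (max i j) :=
  ((alpha_monotone hab).map_sup i j).symm

theorem sMul_alpha_left (a b : Fin n) (k : ℕ) (g : Fin n → Fin n) :
    sMul (alpha a b k) g = alpha (g a) (g b) k :=
  funext fun _ => apply_ite g _ a b

theorem sMul_alpha_eq_alpha_zero (i : ℕ) (ha : (a : ℕ) + j < n) (hb : (b : ℕ) + j < n) :
    sMul (alpha a b i) (alpha a b j) = alpha a b 0 := by
  rw [sMul_alpha_left, alpha_apply_of_lt ha, alpha_apply_of_lt hb, alpha_self, alpha_zero]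

theorem sMul_alpha_eq_self (i : ℕ) (ha : (a : ℕ) + j < n) (hb : n ≤ (b : ℕ) + j) :
    sMul (alpha a b i) (alpha a b j) = alpha a b i := by
  rw [sMul_alpha_left, alpha_apply_of_lt ha, alpha_apply_of_le hb]

theorem Iset_eq_image (a b : Fin n) (k : ℕ) : Iset a b k = alpha a b '' Set.Iic k :=
  Set.ext fun _ => exists_congr fun _ => and_congr_right fun _ => eq_comm

theorem alpha_mem_Iset (h : i ≤ k) : alpha a b i ∈ Iset a b k :=
  ⟨i, h, rfl⟩

theorem sAdd_mem_Iset (hab : a ≤ b) {f g : Fin n → Fin n} (hf : f ∈ Iset a b k)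
    (hg : g ∈ Iset a b k) : sAdd f g ∈ Iset a b k := by
  obtain ⟨i, hi, rfl⟩ := hf
  obtain ⟨j, hj, rfl⟩ := hg
  rw [sAdd_alpha hab]
  exact alpha_mem_Iset (max_le hi hj)

theorem sMul_alpha_mem_Iset (hi : i ≤ k) (ha : (a : ℕ) + j < n) :
    sMul (alpha a b i) (alpha a b j) ∈ Iset a b k := by
  rcases lt_or_ge ((b : ℕ) + j) n with hb | hb
  · rw [sMul_alpha_eq_alpha_zero i ha hb]
    exact alpha_mem_Iset k.zero_le
  · rw [sMul_alpha_eq_self i ha hb]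
    exact alpha_mem_Iset hi

theorem Iset_strictMonoOn (hab : a ≠ b) : StrictMonoOn (Iset a b) (Set.Iic n) := by
  intro j hj k hk hjk
  rw [Iset_eq_image, Iset_eq_image, (alpha_injOn hab).image_ssubset_image_iff
    (Set.Iic_subset_Iic.mpr hj) (Set.Iic_subset_Iic.mpr hk)]
  exact Set.Iic_ssubset_Iic.mpr hjk

theorem stmt5_general (hab : a < b) :
    (∀ k : ℕ,
      (∀ f ∈ Iset a b k, ∀ g ∈ Iset a b k, sAdd f g ∈ Iset a b k) ∧
      (∀ i ≤ k, alpha a b (i - 1) ∈ Iset a b k) ∧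
      (∀ i ≤ k, ∀ j : ℕ, (a : ℕ) + j < n → sMul (alpha a b i) (alpha a b j) ∈ Iset a b k) ∧
      ((b : ℕ) + k < n → ∀ i ≤ k, ∀ j : ℕ, sMul (alpha a b j) (alpha a b i) ∈ Iset a b k)) ∧
    (∀ i j : ℕ, (b : ℕ) + j < n → sMul (alpha a b i) (alpha a b j) = alpha a b 0) ∧
    StrictMonoOn (Iset a b) (Set.Iic n) := by
  have mul_eq_zero (i j : ℕ) (hb : (b : ℕ) + j < n) :
      sMul (alpha a b i) (alpha a b j) = alpha a b 0 :=
    sMul_alpha_eq_alpha_zero i (by omega) hb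
  refine ⟨fun k => ⟨fun f hf g hg => sAdd_mem_Iset hab.le hf hg,
    fun i hi => alpha_mem_Iset (by omega), fun i hi j ha => sMul_alpha_mem_Iset hi ha,
    fun hk i hi j => ?_⟩, mul_eq_zero, Iset_strictMonoOn hab.ne⟩
  rw [mul_eq_zero j i (by omega)]
  exact alpha_mem_Iset k.zero_le

end TypeTwoString

/-- For every `k ≤ n−b−1`, the set `I_k = {α_0,…,α_k}` is a
differential ideal of `DS_{a,b} = {α_0,…,α_{n−b}}` with respect to `D`:
closed under addition, `D(I_k) ⊆ I_k`, and absorbing under multiplication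
by elements of `DS_{a,b}` on both sides; in fact `α_i · α_j = α_0` for all
`i, j ≤ n−b−1`.  These ideals form a strictly increasing chain. -/
theorem stmt5 (n : ℕ) (a b : Fin n) (hab : a < b) :
    (∀ k : ℕ, k ≤ n - (b : ℕ) - 1 →
      -- closed under addition
      (∀ f ∈ Iset a b k, ∀ g ∈ Iset a b k, sAdd f g ∈ Iset a b k) ∧
      -- closed under D (with D(α_i) = α_{i−1} via truncated subtraction)
      (∀ i : ℕ, i ≤ k → alpha a b (i - 1) ∈ Iset a b k) ∧
      -- two-sided ideal of DS_{a,b}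
      (∀ i : ℕ, i ≤ k → ∀ j : ℕ, j ≤ n - (b : ℕ) →
        sMul (alpha a b i) (alpha a b j) ∈ Iset a b k ∧
        sMul (alpha a b j) (alpha a b i) ∈ Iset a b k)) ∧
    -- trivial multiplication on N_a
    (∀ i : ℕ, i ≤ n - (b : ℕ) - 1 → ∀ j : ℕ, j ≤ n - (b : ℕ) - 1 →
      sMul (alpha a b i) (alpha a b j) = alpha a b 0) ∧
    -- the ideals form a strictly increasing chain I_0 ⊂ I_1 ⊂ ⋯ ⊂ I_{n−b−1}
    (∀ k : ℕ, k + 1 ≤ n - (b : ℕ) - 1 → Iset a b k ⊂ Iset a b (k + 1)) := by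
  obtain ⟨hI, h0, hchain⟩ := stmt5_general hab
  exact ⟨fun k hk => ⟨(hI k).1, (hI k).2.1, fun i hi j hj =>
    ⟨(hI k).2.2.1 i hi j (by omega), (hI k).2.2.2 (by omega) i hi j⟩⟩,
    fun i _ j hj => h0 i j (by omega),
    fun k hk => hchain (Set.mem_Iic.mpr (by omega)) (Set.mem_Iic.mpr (by omega)) k.lt_succ_self⟩
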